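/- arXiv:1808.00634 — 2 statements merged into one kernel-verified Lean document; each statement's English description precedes it below -/
import Mathlib

section
/- For every n ≥ 1, if two tuples of real numbers a_1,…,a_n and b_1,…,b_n define the same character of the Houghton group H_n, i.e., a_1·χ_1(η) + ⋯ + a_n·χ_n(η) = b_1·χ_1(η) + ⋯ + b_n·χ_n(η) for all η ∈ H_n, then there is a constant c ∈ ℝ with b_i = a_i + c for every i; consequently the number m(χ) := |{i : a_i < max{a_1,…,a_n}}| depends only on the character χ = a_1·χ_1 + ⋯ + a_n·χ_n and not on the chosen coefficients, i.e., |{i : a_i < max{a_1,…,a_n}}| = |{i : b_i < max{b_1,…,b_n}}|. -/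
/-- A map `f : {1,…,n} × ℕ → {1,…,n} × ℕ` is an *eventual translation* if for each
`i` there exist `m_i ∈ ℤ` and `N_i ∈ ℕ` with `f (i, x) = (i, x + m_i)` for all `x ≥ N_i`. -/
def IsEvTrans {n : ℕ} (f : Fin n × ℕ → Fin n × ℕ) : Prop :=
  ∀ i : Fin n, ∃ m : ℤ, ∃ N : ℕ, ∀ x : ℕ, N ≤ x →
    (f (i, x)).1 = i ∧ ((f (i, x)).2 : ℤ) = (x : ℤ) + m

lemma IsEvTrans.id {n : ℕ} : IsEvTrans (id : Fin n × ℕ → Fin n × ℕ) :=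
  fun i => ⟨0, 0, fun x _ => by simp⟩

lemma IsEvTrans.comp {n : ℕ} {f g : Fin n × ℕ → Fin n × ℕ}
    (hf : IsEvTrans f) (hg : IsEvTrans g) : IsEvTrans (f ∘ g) := by
  intro i
  obtain ⟨m₁, N₁, h₁⟩ := hg i
  obtain ⟨m₂, N₂, h₂⟩ := hf i
  refine ⟨m₁ + m₂, max N₁ ((N₂ : ℤ) - m₁).toNat, fun x hx => ?_⟩
  have hx₁ : N₁ ≤ x := le_trans (le_max_left _ _) hx
  obtain ⟨hg1, hg2⟩ := h₁ x hx₁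
  have hgix : g (i, x) = (i, (g (i, x)).2) := Prod.ext hg1 rfl
  have hxa : ((N₂ : ℤ) - m₁).toNat ≤ x := le_trans (le_max_right _ _) hx
  have hxb : (N₂ : ℤ) - m₁ ≤ ((((N₂ : ℤ) - m₁).toNat : ℤ)) := Int.self_le_toNat _
  have hyN : N₂ ≤ (g (i, x)).2 := by
    have : (N₂ : ℤ) ≤ ((g (i, x)).2 : ℤ) := by omega
    exact_mod_cast this
  obtain ⟨hf1, hf2⟩ := h₂ (g (i, x)).2 hyN
  constructor
  · show (f (g (i, x))).1 = i
    rw [hgix]; exact hf1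
  · show ((f (g (i, x))).2 : ℤ) = (x : ℤ) + (m₁ + m₂)
    rw [hgix, hf2, hg2]; ring

lemma IsEvTrans.inv {n : ℕ} {f : Equiv.Perm (Fin n × ℕ)} (hf : IsEvTrans ⇑f) :
    IsEvTrans ⇑f.symm := by
  intro i
  obtain ⟨m, N, h⟩ := hf i
  refine ⟨-m, ((N : ℤ) + m).toNat, fun y hy => ?_⟩
  have hy' : (N : ℤ) + m ≤ (y : ℤ) :=
    le_trans (Int.self_le_toNat _) (by exact_mod_cast hy)
  set x := ((y : ℤ) - m).toNat with hxdef
  have hx : (x : ℤ) = (y : ℤ) - m := Int.toNat_of_nonneg (by omega)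
  have hxN : N ≤ x := by omega
  obtain ⟨h1, h2⟩ := h x hxN
  have hfx : f (i, x) = (i, y) := by
    have h3 : ((f (i, x)).2 : ℤ) = (y : ℤ) := by rw [h2]; omega
    exact Prod.ext h1 (by exact_mod_cast h3)
  have hsymm : f.symm (i, y) = (i, x) := by rw [← hfx]; exact f.symm_apply_apply _
  rw [hsymm]
  exact ⟨rfl, by omega⟩

/-- The Houghton group `H_n`, as the subgroup of `Equiv.Perm (Fin n × ℕ)` consisting
of the eventual translations. -/
def Houghton (n : ℕ) : Subgroup (Equiv.Perm (Fin n × ℕ)) where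
  carrier := {η | IsEvTrans ⇑η}
  one_mem' := IsEvTrans.id
  mul_mem' := fun ha hb => IsEvTrans.comp ha hb
  inv_mem' := fun ha => IsEvTrans.inv ha

/-- The monoid `M_n` of injective eventual translations, as a submonoid of
`Function.End (Fin n × ℕ)` (whose multiplication is composition). -/
def Mmon (n : ℕ) : Submonoid (Function.End (Fin n × ℕ)) where
  carrier := {f | Function.Injective f ∧ IsEvTrans f}
  one_mem' := ⟨fun _ _ h => h, IsEvTrans.id⟩
  mul_mem' := fun ha hb => ⟨ha.1.comp hb.1, IsEvTrans.comp ha.2 hb.2⟩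

open Classical in
/-- `χ_i(f)` : the unique integer `m` such that `f (i, x) = (i, x + m)` for all
sufficiently large `x` (or junk value `0` if no such integer exists). -/
noncomputable def chiF (n : ℕ) (i : Fin n) (f : Fin n × ℕ → Fin n × ℕ) : ℤ :=
  if h : ∃ m : ℤ, ∃ N : ℕ, ∀ x : ℕ, N ≤ x →
      (f (i, x)).1 = i ∧ ((f (i, x)).2 : ℤ) = (x : ℤ) + m
  then h.choose else 0

lemma chiF_eq {n : ℕ} (i : Fin n) (f : Fin n × ℕ → Fin n × ℕ) (m : ℤ) (N : ℕ)
    (hm : ∀ x : ℕ, N ≤ x → (f (i, x)).1 = i ∧ ((f (i, x)).2 : ℤ) = (x : ℤ) + m) :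
    chiF n i f = m := by
  have hex : ∃ m : ℤ, ∃ N : ℕ, ∀ x : ℕ, N ≤ x →
      (f (i, x)).1 = i ∧ ((f (i, x)).2 : ℤ) = (x : ℤ) + m := ⟨m, N, hm⟩
  unfold chiF
  rw [dif_pos hex]
  obtain ⟨N', h'⟩ := hex.choose_spec
  have h1 := (hm (max N N') (le_max_left _ _)).2
  have h2 := (h' (max N N') (le_max_right _ _)).2
  omega

/-- Shift the ray `p` towards the origin and the ray `q` away from it. -/
def shiftFun {n : ℕ} (p q : Fin n) (z : Fin n × ℕ) : Fin n × ℕ :=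
  if z.1 = p then (if z.2 = 0 then (q, 0) else (p, z.2 - 1))
  else if z.1 = q then (q, z.2 + 1) else z

lemma shiftFun_left_inv {n : ℕ} {p q : Fin n} (hpq : p ≠ q) (z : Fin n × ℕ) :
    shiftFun q p (shiftFun p q z) = z := by
  obtain ⟨i, x⟩ := z
  unfold shiftFun
  grind

/-- The shift as a permutation. -/
def shiftPerm {n : ℕ} (p q : Fin n) (hpq : p ≠ q) : Equiv.Perm (Fin n × ℕ) where
  toFun := shiftFun p q
  invFun := shiftFun q p
  left_inv := shiftFun_left_inv hpq
  right_inv := shiftFun_left_inv hpq.symm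

lemma shiftFun_spec {n : ℕ} {p q : Fin n} (hpq : p ≠ q) (i : Fin n) (x : ℕ) (hx : 1 ≤ x) :
    (shiftFun p q (i, x)).1 = i ∧ ((shiftFun p q (i, x)).2 : ℤ) =
      (x : ℤ) + ((if i = q then 1 else 0) - (if i = p then 1 else 0)) := by
  unfold shiftFun
  grind

lemma diff_eq {n : ℕ} (a b : Fin n → ℝ)
    (h : ∀ η : Equiv.Perm (Fin n × ℕ), η ∈ Houghton n →
      ∑ i : Fin n, a i * (chiF n i ⇑η : ℝ) = ∑ i : Fin n, b i * (chiF n i ⇑η : ℝ))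
    (p q : Fin n) : b q = a q + (b p - a p) := by
  by_cases hpq : p = q
  · subst hpq; ring
  have hs := h (shiftPerm p q hpq) (fun i => ⟨_, 1, shiftFun_spec hpq i⟩)
  have hc : ∀ i, chiF n i ⇑(shiftPerm p q hpq) =
      (if i = q then 1 else 0) - (if i = p then 1 else 0) :=
    fun i => chiF_eq i _ _ 1 (shiftFun_spec hpq i)
  simp only [hc] at hs
  push_cast at hs
  simp [mul_sub, Finset.sum_sub_distrib] at hs
  linarith

lemma card_eq {n : ℕ} (a b : Fin n → ℝ) (c : ℝ) (hc : ∀ i, b i = a i + c)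
    (H : (Finset.univ : Finset (Fin n)).Nonempty) :
    (Finset.univ.filter fun i : Fin n => a i < Finset.univ.sup' H a).card =
      (Finset.univ.filter fun i : Fin n => b i < Finset.univ.sup' H b).card := by
  congr 1
  ext i
  simp only [Finset.mem_filter, Finset.mem_univ, true_and, Finset.lt_sup'_iff, hc]
  simp

/-- If two coefficient tuples define the same character of `H_n` then they differ by a
constant, and consequently the quantity `m(χ) = |{i : a_i < max a}|` is well defined. -/
theorem coefficients_differ_by_constant (n : ℕ) (hn : 1 ≤ n) (a b : Fin n → ℝ)
    (h : ∀ η : Equiv.Perm (Fin n × ℕ), η ∈ Houghton n →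
      ∑ i : Fin n, a i * (chiF n i ⇑η : ℝ) = ∑ i : Fin n, b i * (chiF n i ⇑η : ℝ)) :
    (∃ c : ℝ, ∀ i : Fin n, b i = a i + c) ∧
    (Finset.univ.filter fun i : Fin n =>
        a i < Finset.univ.sup' ⟨⟨0, by omega⟩, Finset.mem_univ _⟩ a).card =
      (Finset.univ.filter fun i : Fin n =>
        b i < Finset.univ.sup' ⟨⟨0, by omega⟩, Finset.mem_univ _⟩ b).card := by
  have hd := diff_eq a b h
  obtain ⟨c, hc⟩ : ∃ c : ℝ, ∀ i : Fin n, b i = a i + c := ⟨_, hd ⟨0, by omega⟩⟩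
  refine ⟨⟨c, hc⟩, ?_⟩
  exact card_eq a b c hc _
end

section
/- For every n ≥ 3, the kernel of the homomorphism χ_1 − χ_2 : H_n → ℤ (sending η to χ_1(η) − χ_2(η)) is a finitely generated group. -/
lemma hk_chi_eq {n : ℕ} {i : Fin n} {f : Fin n × ℕ → Fin n × ℕ} {m : ℤ} {N : ℕ}
    (h : ∀ x : ℕ, N ≤ x → (f (i, x)).1 = i ∧ ((f (i, x)).2 : ℤ) = (x : ℤ) + m) :
    chiF n i f = m := by
  have hex : ∃ m : ℤ, ∃ N : ℕ, ∀ x : ℕ, N ≤ x →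
      (f (i, x)).1 = i ∧ ((f (i, x)).2 : ℤ) = (x : ℤ) + m := ⟨m, N, h⟩
  unfold chiF
  rw [dif_pos hex]
  obtain ⟨N', h'⟩ := hex.choose_spec
  have h1 := (h (max N N') (le_max_left _ _)).2
  have h2 := (h' (max N N') (le_max_right _ _)).2
  omega

lemma hk_chi_spec {n : ℕ} {f : Fin n × ℕ → Fin n × ℕ} (hf : IsEvTrans f) (i : Fin n) :
    ∃ N : ℕ, ∀ x : ℕ, N ≤ x →
      (f (i, x)).1 = i ∧ ((f (i, x)).2 : ℤ) = (x : ℤ) + chiF n i f := by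
  obtain ⟨m, N, h⟩ := hf i
  refine ⟨N, ?_⟩
  rw [hk_chi_eq h]
  exact h

lemma hk_chi_mul {n : ℕ} {f g : Equiv.Perm (Fin n × ℕ)} (hf : f ∈ Houghton n)
    (hg : g ∈ Houghton n) (i : Fin n) :
    chiF n i ⇑(f * g) = chiF n i ⇑f + chiF n i ⇑g := by
  obtain ⟨N₁, h₁⟩ := hk_chi_spec (f := ⇑g) hg i
  obtain ⟨N₂, h₂⟩ := hk_chi_spec (f := ⇑f) hf i
  apply hk_chi_eq (N := max N₁ ((N₂ : ℤ) - chiF n i ⇑g).toNat)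
  intro x hx
  obtain ⟨a, b⟩ := h₁ x (le_trans (le_max_left _ _) hx)
  have hx2 := le_trans (le_max_right _ _) hx
  have e : g (i, x) = (i, (g (i, x)).2) := Prod.ext a rfl
  obtain ⟨c, d⟩ := h₂ (g (i, x)).2 (by omega)
  rw [Equiv.Perm.mul_apply, e]
  exact ⟨c, by rw [d, b]; ring⟩

lemma hk_chi_one {n : ℕ} (i : Fin n) : chiF n i ⇑(1 : Equiv.Perm (Fin n × ℕ)) = 0 :=
  hk_chi_eq (N := 0) (fun x _ => by simp)

lemma hk_chi_inv {n : ℕ} {f : Equiv.Perm (Fin n × ℕ)} (hf : f ∈ Houghton n) (i : Fin n) :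
    chiF n i ⇑(f⁻¹) = - chiF n i ⇑f := by
  have h := hk_chi_mul hf ((Houghton n).inv_mem hf) i
  rw [mul_inv_cancel, hk_chi_one] at h
  omega

/-- The flow from ray `j` into ray `i`. -/
def hkFlow {n : ℕ} (i j : Fin n) (hij : i ≠ j) : Equiv.Perm (Fin n × ℕ) where
  toFun p := if p.1 = i then (i, p.2 + 1) else if p.1 = j then
    (if p.2 = 0 then (i, 0) else (j, p.2 - 1)) else p
  invFun p := if p.1 = j then (j, p.2 + 1) else if p.1 = i then
    (if p.2 = 0 then (j, 0) else (i, p.2 - 1)) else p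
  left_inv := by
    rintro ⟨a, x⟩
    grind
  right_inv := by
    rintro ⟨a, x⟩
    grind

lemma hkFlow_src {n : ℕ} (i j : Fin n) (hij : i ≠ j) (x : ℕ) :
    hkFlow i j hij (i, x) = (i, x + 1) := by simp [hkFlow]

lemma hkFlow_tgt {n : ℕ} (i j : Fin n) (hij : i ≠ j) (x : ℕ) :
    hkFlow i j hij (j, x + 1) = (j, x) := by simp [hkFlow, hij.symm]

lemma hkFlow_ne {n : ℕ} (i j : Fin n) (hij : i ≠ j) (k : Fin n) (hi : k ≠ i) (hj : k ≠ j) (x : ℕ) :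
    hkFlow i j hij (k, x) = (k, x) := by simp [hkFlow, hi, hj]

lemma hkFlow_mem {n : ℕ} (i j : Fin n) (hij : i ≠ j) : hkFlow i j hij ∈ Houghton n := by
  intro k
  by_cases hi : k = i
  · subst hi
    exact ⟨1, 0, fun x _ => by rw [hkFlow_src]; simp⟩
  by_cases hj : k = j
  · subst hj
    refine ⟨-1, 1, fun x hx => ?_⟩
    obtain ⟨y, rfl⟩ := Nat.exists_eq_add_of_le' hx
    rw [hkFlow_tgt]; simp
  · exact ⟨0, 0, fun x _ => by rw [hkFlow_ne i j hij k hi hj]; simp⟩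

lemma hkFlow_chi_src {n : ℕ} (i j : Fin n) (hij : i ≠ j) : chiF n i ⇑(hkFlow i j hij) = 1 :=
  hk_chi_eq (N := 0) (fun x _ => by rw [hkFlow_src]; simp)

lemma hkFlow_chi_ne {n : ℕ} (i j : Fin n) (hij : i ≠ j) (k : Fin n) (hi : k ≠ i) (hj : k ≠ j) :
    chiF n k ⇑(hkFlow i j hij) = 0 :=
  hk_chi_eq (N := 0) (fun x _ => by rw [hkFlow_ne i j hij k hi hj]; simp)

lemma hk_swap_mem {n : ℕ} (p q : Fin n × ℕ) : Equiv.swap p q ∈ Houghton n := by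
  intro k
  refine ⟨0, p.2 + q.2 + 1, fun x hx => ?_⟩
  rw [Equiv.swap_apply_of_ne_of_ne]
  · simp
  · rintro rfl; simp at hx
  · rintro rfl; simp at hx

lemma hk_swap_chi {n : ℕ} (p q : Fin n × ℕ) (i : Fin n) : chiF n i ⇑(Equiv.swap p q) = 0 := by
  apply hk_chi_eq (N := p.2 + q.2 + 1)
  intro x hx
  rw [Equiv.swap_apply_of_ne_of_ne]
  · simp
  · rintro rfl; simp at hx
  · rintro rfl; simp at hx

/-- A subgroup with shifting elements and small swaps contains all swaps. -/
lemma hk_swaps {n : ℕ} (G : Subgroup (Equiv.Perm (Fin n × ℕ)))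
    (hs : ∀ (i j : Fin n) (x y : ℕ), x < 3 → y < 3 → Equiv.swap (i, x) (j, y) ∈ G)
    (hg : ∀ i : Fin n, ∃ g ∈ G, ∃ k : ℕ, 1 ≤ k ∧ k ≤ 2 ∧ ∀ x, g (i, x) = (i, x + k))
    (p q : Fin n × ℕ) : Equiv.swap p q ∈ G := by
  have tr : ∀ a b c : Fin n × ℕ, Equiv.swap a b ∈ G → Equiv.swap b c ∈ G →
      Equiv.swap a c ∈ G := by
    intro a b c h1 h2
    exact SubmonoidClass.swap_mem_trans G h1 h2
  have key : ∀ (i : Fin n) (x : ℕ), Equiv.swap (i, x) (i, 0) ∈ G := by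
    intro i x
    obtain ⟨g, hgG, k, hk1, hk2, hgx⟩ := hg i
    induction x using Nat.strong_induction_on with
    | _ x ih =>
      by_cases hx : x < 3
      · exact hs i i x 0 hx (by norm_num)
      · have h1 : Equiv.swap (i, x - k) (i, x - k - 1) ∈ G := by
          refine tr _ (i, 0) _ (ih _ (by omega)) ?_
          rw [Equiv.swap_comm]
          exact ih _ (by omega)
        have h2 : Equiv.swap (i, x) (i, x - 1) ∈ G := by
          have h3 := G.mul_mem (G.mul_mem hgG h1) (G.inv_mem hgG)
          rw [← Equiv.swap_apply_apply, hgx, hgx] at h3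
          have e1 : x - k + k = x := by omega
          have e2 : x - k - 1 + k = x - 1 := by omega
          rwa [e1, e2] at h3
        exact tr _ _ _ h2 (ih _ (by omega))
  obtain ⟨i, x⟩ := p
  obtain ⟨j, y⟩ := q
  refine tr _ _ _ (key i x) (tr _ (j, 0) _ (hs i j 0 0 (by norm_num) (by norm_num)) ?_)
  rw [Equiv.swap_comm]
  exact key j y

lemma hk_finitary {n : ℕ} (G : Subgroup (Equiv.Perm (Fin n × ℕ)))
    (hs : ∀ p q, Equiv.swap p q ∈ G) (f : Equiv.Perm (Fin n × ℕ)) (hf : f ∈ Houghton n)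
    (h0 : ∀ i, chiF n i ⇑f = 0) : f ∈ G := by
  have h1 : f ∈ Subgroup.closure {σ : Equiv.Perm (Fin n × ℕ) | σ.IsSwap} := by
    rw [mem_closure_isSwap']
    choose N hN using hk_chi_spec (f := ⇑f) hf
    refine Set.Finite.subset (Set.Finite.prod (Set.finite_univ (α := Fin n))
      (Set.finite_lt_nat (∑ i, N i))) ?_
    rintro ⟨i, x⟩ hx
    refine ⟨trivial, ?_⟩
    by_contra hlt
    simp only [Set.mem_ofPred_eq, not_lt] at hlt
    apply hx
    have hle : N i ≤ ∑ i, N i := Finset.single_le_sum (fun _ _ => Nat.zero_le _) (Finset.mem_univ i)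
    obtain ⟨a, b⟩ := hN i x (hle.trans hlt)
    rw [h0] at b
    exact Prod.ext a (by simpa using b)
  refine (Subgroup.closure_le G).2 ?_ h1
  rintro σ ⟨p, q, _, rfl⟩
  exact hs p q

theorem ker_chi1_sub_chi2_fg (n : ℕ) (hn : 3 ≤ n)
    (K : Subgroup (Equiv.Perm (Fin n × ℕ)))
    (hK : ∀ η : Equiv.Perm (Fin n × ℕ),
      η ∈ K ↔ η ∈ Houghton n ∧
        chiF n ⟨0, by omega⟩ ⇑η - chiF n ⟨1, by omega⟩ ⇑η = 0) :
    Group.FG ↥K := by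
  have hKH : ∀ η ∈ K, η ∈ Houghton n := fun η h => ((hK η).1 h).1
  -- shifting elements
  have hshift : ∀ i : Fin n, ∃ g ∈ K, ∃ k : ℕ, 1 ≤ k ∧ k ≤ 2 ∧ ∀ x, g (i, x) = (i, x + k) := by
    obtain ⟨z, hz⟩ : ∃ z : Fin n, z = ⟨0, by omega⟩ := ⟨_, rfl⟩
    obtain ⟨o, ho⟩ : ∃ z : Fin n, z = ⟨1, by omega⟩ := ⟨_, rfl⟩
    obtain ⟨w, hw⟩ : ∃ z : Fin n, z = ⟨2, by omega⟩ := ⟨_, rfl⟩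
    rw [← hz, ← ho] at hK
    have hzo : z ≠ o := by rw [hz, ho]; simp
    have hzw : z ≠ w := by rw [hz, hw]; simp
    have how : o ≠ w := by rw [ho, hw]; simp
    clear hz ho hw
    have ht : hkFlow z w hzw * hkFlow o w how ∈ K := by
      rw [hK]
      refine ⟨mul_mem (hkFlow_mem _ _ _) (hkFlow_mem _ _ _), ?_⟩
      rw [hk_chi_mul (hkFlow_mem _ _ _) (hkFlow_mem _ _ _),
        hk_chi_mul (hkFlow_mem _ _ _) (hkFlow_mem _ _ _), hkFlow_chi_src, hkFlow_chi_src,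
        hkFlow_chi_ne _ _ _ _ hzo hzw, hkFlow_chi_ne _ _ _ _ hzo.symm how]
      norm_num
    intro i
    by_cases h0 : i = z
    · subst h0
      refine ⟨_, ht, 1, le_rfl, by norm_num, fun x => ?_⟩
      rw [Equiv.Perm.mul_apply, hkFlow_ne _ _ _ _ hzo hzw, hkFlow_src]
    by_cases h1 : i = o
    · subst h1
      refine ⟨_, ht, 1, le_rfl, by norm_num, fun x => ?_⟩
      rw [Equiv.Perm.mul_apply, hkFlow_src, hkFlow_ne _ _ _ _ hzo.symm how]
    by_cases h2 : i = w
    · subst h2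
      refine ⟨_, K.inv_mem ht, 2, by norm_num, le_rfl, fun x => ?_⟩
      rw [Equiv.Perm.inv_eq_iff_eq, Equiv.Perm.mul_apply, hkFlow_tgt, hkFlow_tgt]
    · refine ⟨hkFlow i w h2, ?_, 1, le_rfl, by norm_num, fun x => hkFlow_src _ _ _ _⟩
      rw [hK]
      refine ⟨hkFlow_mem _ _ _, ?_⟩
      rw [hkFlow_chi_ne _ _ _ _ (Ne.symm h0) hzw, hkFlow_chi_ne _ _ _ _ (Ne.symm h1) how]
      norm_num
  choose t htK ht using hshift
  -- image lattice
  let L : AddSubgroup (Fin n → ℤ) :=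
    { carrier := {v | ∃ η ∈ K, ∀ i, chiF n i ⇑η = v i}
      zero_mem' := ⟨1, K.one_mem, fun i => hk_chi_one i⟩
      add_mem' := by
        rintro v w ⟨f, hf, hfv⟩ ⟨g, hg, hgw⟩
        exact ⟨f * g, K.mul_mem hf hg, fun i => by
          rw [hk_chi_mul (hKH f hf) (hKH g hg), hfv, hgw]; rfl⟩
      neg_mem' := by
        rintro v ⟨f, hf, hfv⟩
        exact ⟨f⁻¹, K.inv_mem hf, fun i => by rw [hk_chi_inv (hKH f hf), hfv]; rfl⟩ }
  have hL : L.FG := by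
    have := IsNoetherian.noetherian (AddSubgroup.toIntSubmodule L)
    rw [Submodule.fg_iff_addSubgroup_fg] at this
    exact this
  obtain ⟨B, hB⟩ := hL
  have hBL : ∀ v : (B : Set (Fin n → ℤ)), ∃ η ∈ K, ∀ i, chiF n i ⇑η = v.1 i := fun v => by
    have : v.1 ∈ L := hB ▸ AddSubgroup.subset_closure v.2
    exact this
  choose l hlK hl using hBL
  let S : Set (Equiv.Perm (Fin n × ℕ)) := Set.range t ∪ Set.range l ∪
    Set.range (fun a : (Fin n × Fin 3) × (Fin n × Fin 3) =>
      Equiv.swap (a.1.1, (a.1.2 : ℕ)) (a.2.1, (a.2.2 : ℕ)))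
  have hSfin : S.Finite := ((Set.finite_range t).union (Set.finite_range l)).union
    (Set.finite_range _)
  have hSK : Subgroup.closure S ≤ K := by
    rw [Subgroup.closure_le]
    rintro η ((⟨i, rfl⟩ | ⟨v, rfl⟩) | ⟨a, rfl⟩)
    · exact htK i
    · exact hlK v
    · exact (hK _).2 ⟨hk_swap_mem _ _, by rw [hk_swap_chi, hk_swap_chi]; norm_num⟩
  have hsw : ∀ p q, Equiv.swap p q ∈ Subgroup.closure S := by
    apply hk_swaps
    · intro i j x y hx hy
      exact Subgroup.subset_closure (Or.inr ⟨((i, ⟨x, hx⟩), (j, ⟨y, hy⟩)), rfl⟩)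
    · intro i
      exact ⟨t i, Subgroup.subset_closure (Or.inl (Or.inl ⟨i, rfl⟩)), ht i⟩
  have hlift : ∀ v ∈ L, ∃ g ∈ Subgroup.closure S, ∀ i, chiF n i ⇑g = v i := by
    intro v hv
    rw [← hB] at hv
    induction hv using AddSubgroup.closure_induction with
    | mem v hv => exact ⟨l ⟨v, hv⟩, Subgroup.subset_closure (Or.inl (Or.inr ⟨_, rfl⟩)), hl _⟩
    | zero => exact ⟨1, Subgroup.one_mem _, fun i => hk_chi_one i⟩
    | add v w _ _ hv hw =>
      obtain ⟨f, hf, hfv⟩ := hv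
      obtain ⟨g, hg, hgw⟩ := hw
      exact ⟨f * g, Subgroup.mul_mem _ hf hg, fun i => by
          rw [hk_chi_mul (hKH f (hSK hf)) (hKH g (hSK hg)), hfv, hgw]; rfl⟩
    | neg v _ hv =>
      obtain ⟨f, hf, hfv⟩ := hv
      exact ⟨f⁻¹, Subgroup.inv_mem _ hf, fun i => by rw [hk_chi_inv (hKH f (hSK hf)), hfv]; rfl⟩
  have hKS : K ≤ Subgroup.closure S := by
    intro η hη
    obtain ⟨g, hg, hgv⟩ := hlift (fun i => chiF n i ⇑η) ⟨η, hη, fun i => rfl⟩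
    have hgH := hKH g (hSK hg)
    have h := hk_finitary _ hsw (η * g⁻¹) (mul_mem (hKH η hη) (inv_mem hgH)) (fun i => by
      rw [hk_chi_mul (hKH η hη) (inv_mem hgH), hk_chi_inv hgH, hgv]; ring)
    have := Subgroup.mul_mem _ h hg
    rwa [inv_mul_cancel_right] at this
  rw [Group.fg_iff_subgroup_fg, Subgroup.fg_iff]
  exact ⟨S, le_antisymm hSK hKS, hSfin⟩
end
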